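/- Let $n\ge 1$, let $p_1,\dots,p_{2n}\in\mathbb{R}^4$, let $d,\lambda\in\mathbb{N}$, $\Lambda>0$, $m>0$ and set $\kappa:=\max(\Lambda,m)$. Writing $|\vec p\,|:=|(p_1,\dots,p_{2n})|_{2n}$ and, for $k\in\mathbb{R}^4$, $|\vec p_{2n+2}(k)|:=|(p_1,\dots,p_{2n},k,-k)|_{2n+2}$, one has $\sum_{\mu=0}^{d}\frac{1}{\sqrt{\mu!}}\int_{\mathbb{R}^4}\frac{d^4k}{(2\pi)^4\Lambda^4}\Big(\frac{|\vec p_{2n+2}(k)|}{\Lambda}\Big)^{\mu}\,\log^{\lambda}\Big(\max\big(\tfrac{|\vec p_{2n+2}(k)|}{\kappa},\tfrac{\kappa}{m}\big)\Big)\,e^{-\frac{|k|^2}{\Lambda^2}} \;\le\; 2^{d}\,\sum_{\mu=0}^{d}\frac{1}{\sqrt{\mu!}}\Big(\frac{|\vec p\,|}{\Lambda}\Big)^{\mu}\,\Big(\log^{\lambda}\big(\max(\tfrac{|\vec p\,|}{\kappa},\tfrac{\kappa}{m})\big)+\sqrt{\lambda!}\Big)$. -/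

import Mathlib

/-- The subset-sum norm `|p⃗|_n = max_{J ⊆ {1,…,n}} |∑_{i∈J} p_i|` of a tuple of momenta
in `ℝ⁴`. -/
noncomputable def subsetNorm {n : ℕ} (p : Fin n → EuclideanSpace ℝ (Fin 4)) : ℝ :=
  (Finset.univ : Finset (Fin n)).powerset.sup'
    ⟨∅, Finset.empty_mem_powerset _⟩ (fun J => ‖∑ i ∈ J, p i‖)

/-!
Adding the pair `k, -k` raises the subset-sum norm by at most `‖k‖`. Put `q = |p⃗| / Λ` and
`r = ‖k‖ / Λ`. Both factors of the integrand at `k` are then controlled by their values at `k = 0`,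
at the price of a Gaussian: expanding `(q + r) ^ μ` and using `y ^ j ≤ √j! exp (y² / 2)` costs
`2 ^ μ exp (r² / 4)`, while `log (M + r) ^ l ≤ (log M ^ l + √l!) exp (4 r / e)` costs another
`exp (r² / 4)` and a constant below `18`. Against `exp (-r²)` there remains `exp (-r² / 2)`, whose
normalized integral is `1 / (4 π²) ≤ 1 / 36`; this absorbs both the constant and the factor `2` of
`∑_{μ ≤ d} 2 ^ μ ≤ 2 · 2 ^ d`.
-/

open Finset MeasureTheory Real

/-! ### Powers against square roots of factorials -/

theorem pow_le_sqrt_factorial_mul_exp (x : ℝ) (n : ℕ) :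
    x ^ n ≤ √(n.factorial) * exp (x ^ 2 / 2) := by
  have h := pow_div_factorial_le_exp (x ^ 2) (sq_nonneg x) n
  rw [div_le_iff₀' (by positivity)] at h
  apply le_of_sq_le_sq _ (by positivity)
  calc (x ^ n) ^ 2 = (x ^ 2) ^ n := pow_right_comm x n 2
    _ ≤ n.factorial * exp (x ^ 2) := h
    _ = (√(n.factorial) * exp (x ^ 2 / 2)) ^ 2 := by
        rw [mul_pow, sq_sqrt (by positivity), ← exp_nat_mul]
        congr 2
        push_cast
        ring

/-- The truncated series `∑_{ν ≤ n} x ^ ν / √ν!`, which carries the dependence on the external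
momenta on both sides of the estimate. -/
noncomputable def sqrtFactorialSum (n : ℕ) (x : ℝ) : ℝ :=
  ∑ ν ∈ range (n + 1), 1 / √(ν.factorial) * x ^ ν

theorem sqrtFactorialSum_nonneg {x : ℝ} (hx : 0 ≤ x) (n : ℕ) : 0 ≤ sqrtFactorialSum n x :=
  sum_nonneg fun _ _ => by positivity

theorem sqrtFactorialSum_mono {x : ℝ} (hx : 0 ≤ x) : Monotone fun n => sqrtFactorialSum n x :=
  fun _ _ hab => sum_le_sum_of_subset_of_nonneg (range_mono (Nat.succ_le_succ hab))
    fun _ _ _ => by positivity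

theorem choose_div_sqrt_factorial_mul_pow_le {n ν : ℕ} (hν : ν ≤ n) (y : ℝ) :
    n.choose ν / √(n.factorial) * y ^ (n - ν) ≤
      2 ^ n * exp (y ^ 2 / 4) * (1 / √(ν.factorial)) := by
  have hfactorial : √(n.factorial : ℝ) =
      √(n.choose ν) * √(ν.factorial) * √((n - ν).factorial) := by
    rw [← sqrt_mul (by positivity), ← sqrt_mul (by positivity)]
    exact_mod_cast congrArg (fun j : ℕ => √(j : ℝ))
      (Nat.choose_mul_factorial_mul_factorial hν).symm
  have hchoose : √(n.choose ν : ℝ) * √2 ^ (n - ν) ≤ 2 ^ n := by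
    have hbound : (n.choose ν : ℝ) ≤ 2 ^ n := mod_cast Nat.choose_le_two_pow n ν
    have hpow : (2 : ℝ) ^ (n - ν) ≤ 2 ^ n := pow_le_pow_right₀ one_le_two (Nat.sub_le n ν)
    apply le_of_sq_le_sq _ (by positivity)
    rw [mul_pow, sq_sqrt (by positivity), pow_right_comm, sq_sqrt zero_le_two, sq]
    gcongr
  have hpower : y ^ (n - ν) ≤ √2 ^ (n - ν) * (√((n - ν).factorial) * exp (y ^ 2 / 4)) := by
    have h := pow_le_sqrt_factorial_mul_exp (y / √2) (n - ν)
    rwa [div_pow, div_pow, sq_sqrt zero_le_two, div_div, show (2 : ℝ) * 2 = 4 by norm_num,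
      div_le_iff₀' (by positivity)] at h
  have hchoose_pos : 0 < √(n.choose ν : ℝ) := sqrt_pos.2 (mod_cast Nat.choose_pos hν)
  calc n.choose ν / √(n.factorial) * y ^ (n - ν)
      ≤ n.choose ν / √(n.factorial) *
          (√2 ^ (n - ν) * (√((n - ν).factorial) * exp (y ^ 2 / 4))) := by gcongr
    _ = √(n.choose ν) * √2 ^ (n - ν) * exp (y ^ 2 / 4) * (1 / √(ν.factorial)) := by
        rw [hfactorial]
        nth_rewrite 1 [← sq_sqrt (Nat.cast_nonneg (n.choose ν))]
        field_simp
    _ ≤ 2 ^ n * exp (y ^ 2 / 4) * (1 / √(ν.factorial)) := by gcongr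

theorem add_pow_div_sqrt_factorial_le {x : ℝ} (hx : 0 ≤ x) (y : ℝ) (n : ℕ) :
    1 / √(n.factorial) * (x + y) ^ n ≤ 2 ^ n * exp (y ^ 2 / 4) * sqrtFactorialSum n x := by
  rw [add_pow, sqrtFactorialSum, mul_sum, mul_sum]
  refine sum_le_sum fun ν hν => ?_
  have hterm := choose_div_sqrt_factorial_mul_pow_le (mem_range_succ_iff.1 hν) y
  calc 1 / √(n.factorial) * (x ^ ν * y ^ (n - ν) * n.choose ν)
      = n.choose ν / √(n.factorial) * y ^ (n - ν) * x ^ ν := by ring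
    _ ≤ 2 ^ n * exp (y ^ 2 / 4) * (1 / √(ν.factorial)) * x ^ ν := by gcongr
    _ = 2 ^ n * exp (y ^ 2 / 4) * (1 / √(ν.factorial) * x ^ ν) := mul_assoc _ _ _

/-! ### Powers of logarithms -/

theorem sq_log_le {y : ℝ} (hy : 1 ≤ y) : log y ^ 2 ≤ 4 * y / exp 1 ^ 2 := by
  have hsqrt : 0 < √y := sqrt_pos.2 (zero_lt_one.trans_le hy)
  have hhalf : exp 1 * (log y / 2) ≤ √y := by
    have h := exp_one_mul_le_exp (x := log √y)
    rwa [exp_log hsqrt, log_sqrt (zero_le_one.trans hy)] at h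
  have hlog : 0 ≤ log y := log_nonneg hy
  calc log y ^ 2 = 4 * (exp 1 * (log y / 2)) ^ 2 / exp 1 ^ 2 := by field_simp; norm_num
    _ ≤ 4 * √y ^ 2 / exp 1 ^ 2 := by gcongr
    _ = 4 * y / exp 1 ^ 2 := by rw [sq_sqrt (zero_le_one.trans hy)]

theorem log_pow_le_sqrt_factorial_mul_exp {y : ℝ} (hy : 1 ≤ y) (l : ℕ) :
    log y ^ l ≤ √(l.factorial) * exp ((4 / exp 1 * y - l) / 2) := by
  have hseries := pow_div_factorial_le_exp (4 / exp 1 * y) (by positivity) l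
  rw [div_le_iff₀' (by positivity)] at hseries
  apply le_of_sq_le_sq _ (by positivity)
  calc (log y ^ l) ^ 2 = (log y ^ 2) ^ l := pow_right_comm _ l 2
    _ ≤ (4 * y / exp 1 ^ 2) ^ l := by gcongr; exact sq_log_le hy
    _ = (4 / exp 1 * y / exp 1) ^ l := by field_simp
    _ = (4 / exp 1 * y) ^ l / exp l := by rw [div_pow, ← exp_nat_mul, mul_one]
    _ ≤ l.factorial * exp (4 / exp 1 * y) / exp l := by gcongr
    _ = (√(l.factorial) * exp ((4 / exp 1 * y - l) / 2)) ^ 2 := by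
        rw [mul_pow, sq_sqrt (by positivity), ← exp_nat_mul, mul_div_assoc, ← exp_sub]
        congr 2
        push_cast
        ring

theorem log_add_le_log_mul_exp {M r : ℝ} (hM : exp 1 ≤ M) (hr : 0 ≤ r) :
    log (M + r) ≤ log M * exp (r / M) := by
  have hM₀ : 0 < M := (exp_pos 1).trans_le hM
  have hlog : 1 ≤ log M := (le_log_iff_exp_le hM₀).2 hM
  calc log (M + r) = log M + log (1 + r / M) := by
        rw [← log_mul hM₀.ne' (by positivity)]
        congr 1
        field_simp
    _ ≤ log M + r / M := by
        gcongr
        linarith [log_le_sub_one_of_pos (show 0 < 1 + r / M by positivity)]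
    _ ≤ log M * (r / M + 1) := by nlinarith [show 0 ≤ r / M by positivity]
    _ ≤ log M * exp (r / M) := by gcongr; exact add_one_le_exp _

theorem log_max_exp_one_pow_le {M : ℝ} (hM : 1 ≤ M) (l : ℕ) :
    log (max M (exp 1)) ^ l ≤ log M ^ l + √(l.factorial) := by
  have hlog : 0 ≤ log M ^ l := pow_nonneg (log_nonneg hM) l
  have hfactorial : 1 ≤ √(l.factorial : ℝ) := one_le_sqrt.2 (mod_cast l.factorial_pos)
  rcases max_choice M (exp 1) with h | h <;> rw [h]
  · linarith
  · rw [log_exp, one_pow]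
    linarith

theorem log_add_pow_le {M r : ℝ} (hM : 1 ≤ M) (hr : 0 ≤ r) (l : ℕ) :
    log (M + r) ^ l ≤ (log M ^ l + √(l.factorial)) * exp (4 / exp 1 * r) := by
  have hlog : 0 ≤ log M := log_nonneg hM
  -- Either `√l!` dominates, or `M` is so large that `(1 + r / M) ^ l` is harmless.
  rcases le_total (4 / exp 1 * M) l with hsmall | hlarge
  · calc log (M + r) ^ l
        ≤ √(l.factorial) * exp ((4 / exp 1 * (M + r) - l) / 2) :=
          log_pow_le_sqrt_factorial_mul_exp (by linarith) l
      _ ≤ √(l.factorial) * exp (4 / exp 1 * r) := by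
          gcongr
          linarith [show 0 ≤ 4 / exp 1 * r by positivity]
      _ ≤ (log M ^ l + √(l.factorial)) * exp (4 / exp 1 * r) := by
          gcongr
          exact le_add_of_nonneg_left (by positivity)
  · set K := max M (exp 1)
    have hK : exp 1 ≤ K := le_max_right _ _
    have hK₀ : 0 < K := (exp_pos 1).trans_le hK
    have hlog_nonneg : 0 ≤ log (M + r) := log_nonneg (by linarith)
    have hexponent : l * (r / K) ≤ 4 / exp 1 * r := by
      have hlK : (l : ℝ) ≤ 4 / exp 1 * K := hlarge.trans (by gcongr; exact le_max_left _ _)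
      calc l * (r / K) ≤ 4 / exp 1 * K * (r / K) := by gcongr
        _ = 4 / exp 1 * r := by field_simp
    calc log (M + r) ^ l ≤ log (K + r) ^ l := by gcongr; exact le_max_left _ _
      _ ≤ (log K * exp (r / K)) ^ l := by
          gcongr
          · exact hlog_nonneg.trans (log_le_log (by linarith) (by gcongr; exact le_max_left _ _))
          · exact log_add_le_log_mul_exp hK hr
      _ = log K ^ l * exp (l * (r / K)) := by rw [mul_pow, ← exp_nat_mul]
      _ ≤ (log M ^ l + √(l.factorial)) * exp (4 / exp 1 * r) := by
          gcongr
          exact log_max_exp_one_pow_le hM l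

theorem exp_four_div_exp_one_mul_le {r : ℝ} (hr : 0 ≤ r) :
    exp (4 / exp 1 * r) ≤ 18 * exp (r ^ 2 / 4) := by
  have hconst : exp (9 / 4) ≤ 18 := by
    apply le_of_pow_le_pow_left₀ (n := 4) (by norm_num) (by norm_num)
    rw [← exp_nat_mul, show ((4 : ℕ) : ℝ) * (9 / 4) = (9 : ℕ) * 1 by norm_num, exp_nat_mul]
    exact (pow_le_pow_left₀ (exp_pos 1).le exp_one_lt_three.le 9).trans (by norm_num)
  have hslope : 4 / exp 1 ≤ 3 / 2 := by
    rw [div_le_iff₀ (exp_pos 1)]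
    linarith [exp_one_gt_d9]
  calc exp (4 / exp 1 * r) ≤ exp (3 / 2 * r) := by gcongr
    _ ≤ exp (9 / 4 + r ^ 2 / 4) := exp_le_exp.2 (by linarith [sq_nonneg (r - 3)])
    _ = exp (9 / 4) * exp (r ^ 2 / 4) := exp_add _ _
    _ ≤ 18 * exp (r ^ 2 / 4) := by gcongr

/-! ### The subset-sum norm -/

theorem sum_snoc {A : Type*} [AddCommMonoid A] {n : ℕ} (p : Fin n → A) (k : A)
    (J : Finset (Fin (n + 1))) :
    ∑ i ∈ J, (Fin.snoc p k : Fin (n + 1) → A) i =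
      ∑ i with Fin.castSucc i ∈ J, p i + if Fin.last n ∈ J then k else 0 := by
  rw [← univ_inter J, ← sum_ite_mem, Fin.sum_univ_castSucc, sum_filter]
  simp only [Fin.snoc_castSucc, Fin.snoc_last, univ_inter]

section SubsetNorm

variable {n : ℕ} (p : Fin n → EuclideanSpace ℝ (Fin 4))

theorem norm_sum_le_subsetNorm (J : Finset (Fin n)) : ‖∑ i ∈ J, p i‖ ≤ subsetNorm p :=
  le_sup' (fun J => ‖∑ i ∈ J, p i‖) (mem_powerset.2 (subset_univ J))

theorem subsetNorm_nonneg : 0 ≤ subsetNorm p := by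
  simpa using norm_sum_le_subsetNorm p ∅

theorem subsetNorm_snoc_snoc_neg_le (k : EuclideanSpace ℝ (Fin 4)) :
    subsetNorm (Fin.snoc (Fin.snoc p k) (-k)) ≤ subsetNorm p + ‖k‖ := by
  refine sup'_le _ _ fun J _ => ?_
  rw [sum_snoc, sum_snoc, add_assoc]
  refine (norm_add_le _ _).trans (add_le_add (norm_sum_le_subsetNorm p _) ?_)
  split_ifs <;> simp

end SubsetNorm

/-! ### The momentum integral -/

theorem integral_exp_neg_mul_norm_sq {Λ : ℝ} (hΛ : 0 < Λ) :
    ∫ k : EuclideanSpace ℝ (Fin 4), exp (-(1 / (2 * Λ ^ 2)) * ‖k‖ ^ 2) =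
      (2 * π * Λ ^ 2) ^ 2 := by
  rw [GaussianFourier.integral_rexp_neg_mul_sq_norm (by positivity), finrank_euclideanSpace_fin]
  norm_num
  field_simp

theorem max_div_le_max_div_add {P s t Λ κ c : ℝ} (ht : 0 ≤ t) (hst : s ≤ P + t)
    (hΛ : 0 < Λ) (hΛκ : Λ ≤ κ) : max (s / κ) c ≤ max (P / κ) c + t / Λ := by
  have hκ : 0 < κ := hΛ.trans_le hΛκ
  refine max_le ?_ (le_add_of_le_of_nonneg (le_max_right _ _) (by positivity))
  calc s / κ ≤ P / κ + t / κ := by rw [← add_div]; gcongr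
    _ ≤ max (P / κ) c + t / Λ := by gcongr; exact le_max_left _ _

theorem pow_mul_log_pow_mul_exp_le {P s t Λ κ c : ℝ} (hP : 0 ≤ P) (hs : 0 ≤ s) (ht : 0 ≤ t)
    (hst : s ≤ P + t) (hΛ : 0 < Λ) (hΛκ : Λ ≤ κ) (hc : 1 ≤ c) (μ l : ℕ) :
    1 / √(μ.factorial) * ((s / Λ) ^ μ * log (max (s / κ) c) ^ l * exp (-t ^ 2 / Λ ^ 2)) ≤
      2 ^ μ * sqrtFactorialSum μ (P / Λ) * (log (max (P / κ) c) ^ l + √(l.factorial)) * 18 *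
        exp (-(1 / (2 * Λ ^ 2)) * t ^ 2) := by
  set r := t / Λ with hr
  set M := max (P / κ) c
  have hr₀ : 0 ≤ r := by positivity
  have hM : 1 ≤ M := hc.trans (le_max_right _ _)
  have hlogM : 0 ≤ log M := log_nonneg hM
  have hmax : 1 ≤ max (s / κ) c := hc.trans (le_max_right _ _)
  have hlog₀ : 0 ≤ log (max (s / κ) c) := log_nonneg hmax
  have hS := sqrtFactorialSum_nonneg (div_nonneg hP hΛ.le) μ
  have hpow : 1 / √(μ.factorial) * (s / Λ) ^ μ ≤
      2 ^ μ * exp (r ^ 2 / 4) * sqrtFactorialSum μ (P / Λ) := by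
    refine le_trans ?_ (add_pow_div_sqrt_factorial_le (div_nonneg hP hΛ.le) r μ)
    rw [hr, ← add_div]
    gcongr
  have hlog : log (max (s / κ) c) ^ l ≤
      (log M ^ l + √(l.factorial)) * (18 * exp (r ^ 2 / 4)) :=
    calc log (max (s / κ) c) ^ l ≤ log (M + r) ^ l := by
          gcongr
          exact max_div_le_max_div_add ht hst hΛ hΛκ
      _ ≤ (log M ^ l + √(l.factorial)) * exp (4 / exp 1 * r) := log_add_pow_le hM hr₀ l
      _ ≤ (log M ^ l + √(l.factorial)) * (18 * exp (r ^ 2 / 4)) := by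
          gcongr
          exact exp_four_div_exp_one_mul_le hr₀
  have hexp : exp (-(1 / (2 * Λ ^ 2)) * t ^ 2) =
      exp (r ^ 2 / 4) * exp (r ^ 2 / 4) * exp (-t ^ 2 / Λ ^ 2) := by
    rw [← exp_add, ← exp_add, hr]
    congr 1
    field_simp
    ring
  calc 1 / √(μ.factorial) * ((s / Λ) ^ μ * log (max (s / κ) c) ^ l * exp (-t ^ 2 / Λ ^ 2))
      = 1 / √(μ.factorial) * (s / Λ) ^ μ * log (max (s / κ) c) ^ l *
          exp (-t ^ 2 / Λ ^ 2) := by ring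
    _ ≤ 2 ^ μ * exp (r ^ 2 / 4) * sqrtFactorialSum μ (P / Λ) *
          ((log M ^ l + √(l.factorial)) * (18 * exp (r ^ 2 / 4))) *
          exp (-t ^ 2 / Λ ^ 2) := by gcongr
    _ = _ := by rw [hexp]; ring

theorem integral_subsetNorm_pow_mul_log_pow_le {n : ℕ} (p : Fin n → EuclideanSpace ℝ (Fin 4))
    {Λ κ c : ℝ} (hΛ : 0 < Λ) (hΛκ : Λ ≤ κ) (hc : 1 ≤ c) (μ l : ℕ) :
    1 / √(μ.factorial) * ((1 / ((2 * π) ^ 4 * Λ ^ 4)) *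
        ∫ k : EuclideanSpace ℝ (Fin 4), (subsetNorm (Fin.snoc (Fin.snoc p k) (-k)) / Λ) ^ μ *
          log (max (subsetNorm (Fin.snoc (Fin.snoc p k) (-k)) / κ) c) ^ l *
          exp (-‖k‖ ^ 2 / Λ ^ 2)) ≤
      2 ^ μ * (sqrtFactorialSum μ (subsetNorm p / Λ) *
        (log (max (subsetNorm p / κ) c) ^ l + √(l.factorial)) / 2) := by
  set S := sqrtFactorialSum μ (subsetNorm p / Λ)
  set A := log (max (subsetNorm p / κ) c) ^ l + √(l.factorial)
  have hlog (s : ℝ) : 0 ≤ log (max (s / κ) c) := log_nonneg (hc.trans (le_max_right _ _))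
  have hA : 0 ≤ A := add_nonneg (pow_nonneg (hlog _) l) (sqrt_nonneg _)
  have hS : 0 ≤ S := sqrtFactorialSum_nonneg (div_nonneg (subsetNorm_nonneg p) hΛ.le) μ
  have hgauss := integral_exp_neg_mul_norm_sq hΛ
  have hintegrable : Integrable
      fun k : EuclideanSpace ℝ (Fin 4) => exp (-(1 / (2 * Λ ^ 2)) * ‖k‖ ^ 2) :=
    .of_integral_ne_zero (by rw [hgauss]; positivity)
  have hmono := integral_mono_of_nonneg (μ := volume)
    (.of_forall fun k => mul_nonneg (by positivity) (mul_nonneg (mul_nonneg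
      (pow_nonneg (div_nonneg (subsetNorm_nonneg _) hΛ.le) μ) (pow_nonneg (hlog _) l))
      (exp_pos _).le))
    (hintegrable.const_mul (2 ^ μ * S * A * 18))
    (.of_forall fun k => pow_mul_log_pow_mul_exp_le (subsetNorm_nonneg p) (subsetNorm_nonneg _)
      (norm_nonneg k) (subsetNorm_snoc_snoc_neg_le p k) hΛ hΛκ hc μ l)
  rw [integral_const_mul, integral_const_mul, hgauss] at hmono
  rw [mul_left_comm, one_div_mul_eq_div, div_le_iff₀ (by positivity)]
  have hpi : 9 ≤ π ^ 2 := by nlinarith [pi_gt_three]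
  calc _ ≤ 2 ^ μ * S * A * 18 * (2 * π * Λ ^ 2) ^ 2 := hmono
    _ = 2 ^ μ * S * A * (8 * π ^ 2 * Λ ^ 4) * 9 := by ring
    _ ≤ 2 ^ μ * S * A * (8 * π ^ 2 * Λ ^ 4) * π ^ 2 := by gcongr
    _ = 2 ^ μ * (S * A / 2) * ((2 * π) ^ 4 * Λ ^ 4) := by ring

theorem sum_range_two_pow_le (d : ℕ) : ∑ μ ∈ range (d + 1), (2 : ℝ) ^ μ ≤ 2 ^ d * 2 := by
  rw [geom_sum_eq (by norm_num), ← pow_succ]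
  norm_num

/-- The constant `c` plays the role of `κ / m`. -/
theorem stmt_9_general {n : ℕ} (p : Fin n → EuclideanSpace ℝ (Fin 4)) (d l : ℕ) {Λ κ c : ℝ}
    (hΛ : 0 < Λ) (hΛκ : Λ ≤ κ) (hc : 1 ≤ c) :
    ∑ μ ∈ range (d + 1), (1 / √(μ.factorial)) * ((1 / ((2 * π) ^ 4 * Λ ^ 4)) *
        ∫ k : EuclideanSpace ℝ (Fin 4), (subsetNorm (Fin.snoc (Fin.snoc p k) (-k)) / Λ) ^ μ *
          log (max (subsetNorm (Fin.snoc (Fin.snoc p k) (-k)) / κ) c) ^ l *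
          exp (-‖k‖ ^ 2 / Λ ^ 2)) ≤
      2 ^ d * ∑ μ ∈ range (d + 1), (1 / √(μ.factorial)) * (subsetNorm p / Λ) ^ μ *
        (log (max (subsetNorm p / κ) c) ^ l + √(l.factorial)) := by
  have hq : 0 ≤ subsetNorm p / Λ := div_nonneg (subsetNorm_nonneg p) hΛ.le
  rw [← sum_mul]
  change _ ≤ 2 ^ d * (sqrtFactorialSum d (subsetNorm p / Λ) * _)
  set S := sqrtFactorialSum d (subsetNorm p / Λ)
  set A := log (max (subsetNorm p / κ) c) ^ l + √(l.factorial)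
  have hS : 0 ≤ S := sqrtFactorialSum_nonneg hq d
  have hA : 0 ≤ A :=
    add_nonneg (pow_nonneg (log_nonneg (hc.trans (le_max_right _ _))) l) (sqrt_nonneg _)
  calc _ ≤ ∑ μ ∈ range (d + 1), 2 ^ μ * (S * A / 2) := by
        refine sum_le_sum fun μ hμ =>
          (integral_subsetNorm_pow_mul_log_pow_le p hΛ hΛκ hc μ l).trans ?_
        gcongr
        exact sqrtFactorialSum_mono hq (mem_range_succ_iff.1 hμ)
    _ = (∑ μ ∈ range (d + 1), 2 ^ μ) * (S * A / 2) := (sum_mul _ _ _).symm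
    _ ≤ 2 ^ d * 2 * (S * A / 2) := by gcongr; exact sum_range_two_pow_le d
    _ = 2 ^ d * (S * A) := by ring

/-- The Gaussian momentum integral estimate with the subset-sum norm of the extended
momentum tuple `(p₁,…,p_{2n},k,-k)`: integration against `e^{-|k|²/Λ²}` (with the
normalization `∫_k = ∫ d⁴k/(2π)⁴` and an extra factor `Λ⁻⁴`) is bounded by `2^d` times
the same expression evaluated at `k = 0`, up to the additive `√λ!` term. -/
theorem stmt_9 (n : ℕ) (hn : 1 ≤ n) (p : Fin (2 * n) → EuclideanSpace ℝ (Fin 4))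
    (d lam : ℕ) (Λ m : ℝ) (hΛ : 0 < Λ) (hm : 0 < m) :
    ∑ μ ∈ Finset.range (d + 1), (1 / Real.sqrt (Nat.factorial μ)) *
      ((1 / ((2 * Real.pi) ^ 4 * Λ ^ 4)) *
        ∫ k : EuclideanSpace ℝ (Fin 4),
          (subsetNorm (Fin.snoc (Fin.snoc p k) (-k)) / Λ) ^ μ *
            Real.log (max (subsetNorm (Fin.snoc (Fin.snoc p k) (-k)) / max Λ m)
              (max Λ m / m)) ^ lam *
            Real.exp (-‖k‖ ^ 2 / Λ ^ 2)) ≤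
      2 ^ d * ∑ μ ∈ Finset.range (d + 1), (1 / Real.sqrt (Nat.factorial μ)) *
        (subsetNorm p / Λ) ^ μ *
        (Real.log (max (subsetNorm p / max Λ m) (max Λ m / m)) ^ lam +
          Real.sqrt (Nat.factorial lam)) := by
  exact stmt_9_general p d lam hΛ (le_max_left Λ m) ((one_le_div hm).2 (le_max_right Λ m))
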